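/- Let d ≥ 1 and N ≥ 2 be integers, let η be a distortion function and let 0 < α < d. Then there exists m_0 ∈ ℕ such that for every m ≥ m_0 the following holds: for every (N,m)-fat Cantor set F ⊆ [0,1]^d with construction families (𝓕_n), every metric space Y, every η-quasisymmetry f : F → Y, every n ∈ ℕ and every Q_0 ∈ 𝓕_n, one has |f(Q_0)|^α ≤ ∑_{Q ∈ 𝓕_{n+1}(Q_0)} |f(Q)|^α, where f(Q) denotes f(Q ∩ F) and |·| denotes diameter. -/

import Mathlib

open Set Metric MeasureTheory ProbabilityTheory Filter
open scoped ENNReal NNReal Classical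

noncomputable section

/-- A distortion function: a homeomorphism of `[0,∞)` onto itself
(equivalently, a continuous strictly increasing surjection of `[0,∞)` with `η 0 = 0`). -/
def IsDistortion (η : ℝ → ℝ) : Prop :=
  ContinuousOn η (Set.Ici 0) ∧ StrictMonoOn η (Set.Ici 0) ∧ η 0 = 0 ∧
    Set.SurjOn η (Set.Ici 0) (Set.Ici 0)

/-- `f` is an `η`-quasisymmetry on the set `E`:
it is injective on `E` and satisfies the quasisymmetry inequality on points of `E`. -/
def IsQSOn {X Y : Type*} [MetricSpace X] [MetricSpace Y] (η : ℝ → ℝ) (f : X → Y)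
    (E : Set X) : Prop :=
  Set.InjOn f E ∧ ∀ x ∈ E, ∀ y ∈ E, ∀ z ∈ E, x ≠ z →
    dist (f x) (f y) ≤ η (dist x y / dist x z) * dist (f x) (f z)

/-- `f` is a `β`-power quasisymmetry on `E`: an `η`-quasisymmetry with
`η t = C * max (t ^ β) (t ^ (1 / β))` for some `C > 0`. -/
def IsPowerQSOn {X Y : Type*} [MetricSpace X] [MetricSpace Y] (β : ℝ) (f : X → Y)
    (E : Set X) : Prop :=
  ∃ C : ℝ, 0 < C ∧ IsQSOn (fun t => C * max (t ^ β) (t ^ (1 / β))) f E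

/-- Distance between two sets: `inf {dist a b : a ∈ A, b ∈ B}`. -/
def setDist {X : Type*} [MetricSpace X] (A B : Set X) : ℝ :=
  sInf (Set.image2 dist A B)

/-- The closed axis-parallel cube with lower corner `c` and side length `l`. -/
def cube {d : ℕ} (c : Fin d → ℝ) (l : ℝ) : Set (EuclideanSpace ℝ (Fin d)) :=
  {x | ∀ i, c i ≤ x i ∧ x i ≤ c i + l}

/-- Lower corner of the subcube with address `a` when the cube with lower corner `c` and
side `l` is divided into `K ^ d` congruent subcubes. -/
def childCorner {d : ℕ} (c : Fin d → ℝ) (l : ℝ) (K : ℕ) (a : Fin d → Fin K) : Fin d → ℝ :=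
  fun i => c i + l / K * (a i : ℝ)

/-- Side length `N ^ (-m*n)` of level-`n` cubes in the `(N,m)`-fat Cantor construction. -/
def fatSide (N m n : ℕ) : ℝ := ((N : ℝ) ^ (m * n))⁻¹

/-- `𝓕` is the sequence of families of cubes of an `(N,m)`-fat Cantor construction in `[0,1]^d`:
`𝓕 0 = {[0,1]^d}`, and each cube `Q ∈ 𝓕 n` is divided into `N^(m*d)` congruent subcubes of which
exactly one is removed, `𝓕 (n+1)` consisting of all retained subcubes. -/
def IsFatCantorFamilies (d N m : ℕ) (𝓕 : ℕ → Set (Set (EuclideanSpace ℝ (Fin d)))) : Prop :=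
  𝓕 0 = {cube (fun _ => 0) 1} ∧
  (∀ n, ∀ Q ∈ 𝓕 n, ∃ c : Fin d → ℝ, Q = cube c (fatSide N m n) ∧
    ∃ a₀ : Fin d → Fin (N ^ m),
      {Q' ∈ 𝓕 (n + 1) | Q' ⊆ Q} =
        {Q' | ∃ a : Fin d → Fin (N ^ m), a ≠ a₀ ∧
          Q' = cube (childCorner c (fatSide N m n) (N ^ m) a) (fatSide N m (n + 1))}) ∧
  (∀ n, ∀ Q' ∈ 𝓕 (n + 1), ∃ Q ∈ 𝓕 n, Q' ⊆ Q)

/-- `F` is an `(N,m)`-fat Cantor set in `[0,1]^d`. -/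
def IsFatCantorSet (d N m : ℕ) (F : Set (EuclideanSpace ℝ (Fin d))) : Prop :=
  ∃ 𝓕, IsFatCantorFamilies d N m 𝓕 ∧ F = ⋂ n, ⋃₀ 𝓕 n

/-- Side length `∏_{m=1}^n (N m)⁻¹` of level-`n` cubes of a dense-Cantor construction with
subdivision sequence `N`. -/
def denseSide (N : ℕ → ℕ) (n : ℕ) : ℝ := ∏ m ∈ Finset.Icc 1 n, ((N m : ℝ))⁻¹

/-- `𝓔` is the sequence of families of cubes of a dense-Cantor construction in `[0,1]^d`
with subdivision sequence `N`: `𝓔 0 = {[0,1]^d}`, every cube of `𝓔 (n+1)` is one of the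
`(N (n+1))^d` congruent subcubes of a cube of `𝓔 n`, and every cube of `𝓔 n` has at least one
retained subcube in `𝓔 (n+1)`. -/
def IsDenseCantorFamilies (d : ℕ) (N : ℕ → ℕ)
    (𝓔 : ℕ → Set (Set (EuclideanSpace ℝ (Fin d)))) : Prop :=
  𝓔 0 = {cube (fun _ => 0) 1} ∧
  (∀ n, ∀ Q' ∈ 𝓔 (n + 1), ∃ Q ∈ 𝓔 n, Q' ⊆ Q ∧ ∃ c : Fin d → ℝ, Q = cube c (denseSide N n) ∧
      ∃ a : Fin d → Fin (N (n + 1)),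
        Q' = cube (childCorner c (denseSide N n) (N (n + 1)) a) (denseSide N (n + 1))) ∧
  (∀ n, ∀ Q ∈ 𝓔 n, ∃ Q' ∈ 𝓔 (n + 1), Q' ⊆ Q)

/-- A (possibly degenerate) line segment parallel to the `d`-th coordinate direction
(the kernel of the projection to the first `d-1` coordinates). -/
def IsVerticalSeg {d : ℕ} (A : Set (EuclideanSpace ℝ (Fin d))) : Prop :=
  ∃ x y : EuclideanSpace ℝ (Fin d), A = segment ℝ x y ∧
    ∀ i : Fin d, (i : ℕ) < d - 1 → x i = y i

/-- The dense-Cantor construction `𝓔` is `(Δ_n)_n`-dense: for all sufficiently large `n` and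
every `Q ∈ 𝓔 n`, every vertical line segment contained in `Q \ ⋃ 𝓔 (n+1)` has diameter at most
`Δ (n+1) * diam Q`. -/
def IsDeltaDense {d : ℕ} (Δ : ℕ → ℝ) (𝓔 : ℕ → Set (Set (EuclideanSpace ℝ (Fin d)))) : Prop :=
  ∃ n₀ : ℕ, ∀ n, n₀ ≤ n → ∀ Q ∈ 𝓔 n, ∀ A : Set (EuclideanSpace ℝ (Fin d)),
    IsVerticalSeg A → A ⊆ Q \ ⋃₀ 𝓔 (n + 1) →
      Metric.diam A ≤ Δ (n + 1) * Metric.diam Q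

/-- The dyadic cube of level `k` in `[0,1]^d` with address `a`. -/
def dyCube (d k : ℕ) (a : Fin d → Fin (2 ^ k)) : Set (EuclideanSpace ℝ (Fin d)) :=
  cube (fun i => (a i : ℝ) / 2 ^ k) (((2 : ℝ) ^ k)⁻¹)

/-- Lower corner of the level-`n` `N`-adic cube of `[0,1]^d` with address word `w`. -/
def fatCorner (d N : ℕ) {n : ℕ} (w : Fin n → Fin d → Fin N) : Fin d → ℝ :=
  fun i => ∑ j : Fin n, ((N : ℝ) ^ (j.val + 1))⁻¹ * (w j i : ℝ)

/-- In fractal percolation with retention coins `X`, the cube with address word `w` survives if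
all of its ancestors (including itself) are retained. -/
def FatSurvives {Ω : Type*} {d N : ℕ} (X : ∀ n : ℕ, (Fin n → Fin d → Fin N) → Ω → Bool)
    (ω : Ω) {n : ℕ} (w : Fin n → Fin d → Fin N) : Prop :=
  ∀ m : ℕ, ∀ h : m ≤ n, 1 ≤ m → X m (fun j => w (Fin.castLE h j)) ω = true

/-- The fractal percolation limit set determined by the retention coins `X` at sample `ω`:
the intersection over `n` of the unions of surviving level-`n` `N`-adic cubes. -/
def fatPerc {Ω : Type*} (d N : ℕ) (X : ∀ n : ℕ, (Fin n → Fin d → Fin N) → Ω → Bool)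
    (ω : Ω) : Set (EuclideanSpace ℝ (Fin d)) :=
  ⋂ n : ℕ, ⋃ w : Fin n → Fin d → Fin N, ⋃ (_ : FatSurvives X ω w),
    cube (fatCorner d N w) (((N : ℝ) ^ n)⁻¹)

/-- Lower corner of the level-`n` cube with address word `w` in the subdivision scheme where the
level-`j` cubes have side `denseSide N j`. -/
def denseCorner (d : ℕ) (N : ℕ → ℕ) {n : ℕ}
    (w : (j : Fin n) → Fin d → Fin (N (j.val + 1))) : Fin d → ℝ :=
  fun i => ∑ j : Fin n, denseSide N (j.val + 1) * (w j i : ℝ)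

/-- Survival of the cube with address word `w` in dense fractal percolation with coins `X`. -/
def DenseSurvives {Ω : Type*} {d : ℕ} {N : ℕ → ℕ}
    (X : ∀ n : ℕ, ((j : Fin n) → Fin d → Fin (N (j.val + 1))) → Ω → Bool) (ω : Ω) {n : ℕ}
    (w : (j : Fin n) → Fin d → Fin (N (j.val + 1))) : Prop :=
  ∀ m : ℕ, ∀ h : m ≤ n, 1 ≤ m → X m (fun j => w (Fin.castLE h j)) ω = true

/-- The dense fractal percolation limit set determined by the retention coins `X` at `ω`. -/
def densePerc {Ω : Type*} (d : ℕ) (N : ℕ → ℕ)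
    (X : ∀ n : ℕ, ((j : Fin n) → Fin d → Fin (N (j.val + 1))) → Ω → Bool) (ω : Ω) :
    Set (EuclideanSpace ℝ (Fin d)) :=
  ⋂ n : ℕ, ⋃ w : (j : Fin n) → Fin d → Fin (N (j.val + 1)), ⋃ (_ : DenseSurvives X ω w),
    cube (denseCorner d N w) (denseSide N n)

/-- The function `g_N (s) = 1 - (1-s)^N - N s (1-s)^(N-1) + N^(-5)`. -/
def gFun (N : ℕ) (s : ℝ) : ℝ :=
  1 - (1 - s) ^ N - N * s * (1 - s) ^ (N - 1) + ((N : ℝ) ^ 5)⁻¹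

end
lemma fc_dist_le {e : ℕ} (x y : EuclideanSpace ℝ (Fin (e+1))) (t : ℝ) (ht : 0 ≤ t)
    (h : ∀ i, |x i - y i| ≤ t) : dist x y ≤ ((e:ℝ)+1) * t := by
  have h1 : dist x y ^ 2 ≤ (((e:ℝ)+1) * t)^2 := by
    rw [EuclideanSpace.dist_sq_eq]
    calc ∑ i, dist (x i) (y i) ^ 2 ≤ ∑ i : Fin (e+1), t^2 := by
          apply Finset.sum_le_sum
          intro i _
          rw [Real.dist_eq]
          exact pow_le_pow_left₀ (abs_nonneg _) (h i) 2
      _ = ((e:ℝ)+1) * t^2 := by simp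
      _ ≤ (((e:ℝ)+1) * t)^2 := by
          rw [mul_pow]
          apply mul_le_mul_of_nonneg_right _ (sq_nonneg t)
          have : (0:ℝ) ≤ e := Nat.cast_nonneg e
          nlinarith
  exact (sq_le_sq₀ dist_nonneg (by positivity)).1 h1

lemma fc_coord_le {e : ℕ} (x y : EuclideanSpace ℝ (Fin (e+1))) (i : Fin (e+1)) :
    |x i - y i| ≤ dist x y := by
  have h := EuclideanSpace.dist_sq_eq x y
  have h2 : dist (x i) (y i) ^ 2 ≤ dist x y ^ 2 := by
    rw [h]
    exact Finset.single_le_sum (f := fun i => dist (x i) (y i) ^ 2)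
      (fun j _ => sq_nonneg _) (Finset.mem_univ i)
  rw [← Real.dist_eq]
  exact (sq_le_sq₀ dist_nonneg dist_nonneg).1 h2

lemma fc_eta_mono {η : ℝ → ℝ} (hη : IsDistortion η) {s t : ℝ} (hs : 0 ≤ s) (hst : s ≤ t) :
    η s ≤ η t :=
  hη.2.1.monotoneOn hs (hs.trans hst) hst

lemma fc_eta_pos {η : ℝ → ℝ} (hη : IsDistortion η) {t : ℝ} (ht : 0 < t) : 0 < η t := by
  have := hη.2.1 (Set.mem_Ici.2 le_rfl) (Set.mem_Ici.2 ht.le) ht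
  rwa [hη.2.2.1] at this

lemma fc_qs {X Y : Type*} [MetricSpace X] [MetricSpace Y] {η : ℝ → ℝ} (hη : IsDistortion η)
    {f : X → Y} {F : Set X} (hf : IsQSOn η f F) {x y z : X} (hx : x ∈ F) (hy : y ∈ F)
    (hz : z ∈ F) {r R : ℝ} (hr : 0 < r) (hxz : r ≤ dist x z) (hxy : dist x y ≤ R) :
    dist (f x) (f y) ≤ η (R / r) * dist (f x) (f z) := by
  have hne : x ≠ z := by
    rintro rfl
    rw [dist_self] at hxz
    linarith
  refine (hf.2 x hx y hy z hz hne).trans ?_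
  apply mul_le_mul_of_nonneg_right _ dist_nonneg
  apply fc_eta_mono hη (by positivity)
  have : 0 ≤ R := dist_nonneg.trans hxy
  exact div_le_div₀ this hxy hr hxz

lemma fc_side_pos {N : ℕ} (hN : 2 ≤ N) (m n : ℕ) : 0 < fatSide N m n := by
  unfold fatSide
  have : (0:ℝ) < N := by exact_mod_cast (by omega : 0 < N)
  positivity

lemma fc_side_succ {N : ℕ} (m n : ℕ) :
    fatSide N m (n+1) = fatSide N m n / ((N^m : ℕ) : ℝ) := by
  unfold fatSide
  rw [Nat.mul_succ, pow_add, mul_inv]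
  push_cast
  rfl

/-- The child cube with address `a`. -/
def fcChild {e : ℕ} (c : Fin (e+1) → ℝ) (l : ℝ) (K : ℕ) (a : Fin (e+1) → Fin K) :
    Set (EuclideanSpace ℝ (Fin (e+1))) := cube (childCorner c l K a) (l / K)

lemma fc_child_data {e N m : ℕ} {𝓕 : ℕ → Set (Set (EuclideanSpace ℝ (Fin (e+1))))}
    (hF : IsFatCantorFamilies (e+1) N m 𝓕) {n : ℕ} {Q : Set (EuclideanSpace ℝ (Fin (e+1)))}
    (hQ : Q ∈ 𝓕 n) {K : ℕ} (hK : K = N^m) :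
    ∃ (c : Fin (e+1) → ℝ) (a₀ : Fin (e+1) → Fin K),
      Q = cube c (fatSide N m n) ∧
      ∀ Q', (Q' ∈ 𝓕 (n+1) ∧ Q' ⊆ Q) ↔
        ∃ a, a ≠ a₀ ∧ Q' = fcChild c (fatSide N m n) K a := by
  subst hK
  obtain ⟨c, hc, a₀, h⟩ := hF.2.1 n Q hQ
  refine ⟨c, a₀, hc, fun Q' => ?_⟩
  have := Set.ext_iff.1 h Q'
  simp only [Set.mem_ofPred_eq] at this
  rw [this]
  unfold fcChild
  rw [fc_side_succ]

/-- Replacement of the removed address by a neighbour. -/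
lemma fc_repl {e K : ℕ} (hK : 8 ≤ K) (a₀ : Fin (e+1) → Fin K) :
    ∃ g : (Fin (e+1) → Fin K) → (Fin (e+1) → Fin K),
      (∀ a, g a ≠ a₀) ∧ (∀ a, a ≠ a₀ → g a = a) ∧
      (∀ a i, ((g a i : ℕ) : ℝ) ≤ (a i : ℕ) + 1 ∧ ((a i : ℕ) : ℝ) ≤ (g a i : ℕ) + 1) := by
  have hb : ∃ b : Fin K, b ≠ a₀ 0 ∧ (b : ℕ) ≤ (a₀ 0 : ℕ) + 1 ∧ (a₀ 0 : ℕ) ≤ (b : ℕ) + 1 := by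
    by_cases h0 : (a₀ 0 : ℕ) = 0
    · refine ⟨⟨1, by omega⟩, ?_, ?_, ?_⟩
      · intro h
        rw [← h] at h0
        simp at h0
      · simp
      · simp [h0]
    · refine ⟨⟨(a₀ 0 : ℕ) - 1, by omega⟩, ?_, ?_, ?_⟩
      · intro h
        have := congrArg Fin.val h
        simp only at this
        omega
      · simp only
        omega
      · simp only
        omega
  obtain ⟨b, hb0, hb1, hb2⟩ := hb
  refine ⟨fun a => if a = a₀ then Function.update a₀ 0 b else a, ?_, ?_, ?_⟩
  · intro a
    by_cases h : a = a₀
    · simp only [h, if_true]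
      intro h'
      apply hb0
      have := congrFun h' 0
      simpa using this
    · simp [h]
  · intro a h
    simp [h]
  · intro a i
    by_cases h : a = a₀
    · subst h
      simp only [if_true]
      by_cases hi : i = 0
      · subst hi
        simp only [Function.update_self]
        exact ⟨by exact_mod_cast hb1, by exact_mod_cast hb2⟩
      · simp [Function.update_of_ne hi]
    · simp [h]

lemma fc_cube_closed {d : ℕ} (c : Fin d → ℝ) (l : ℝ) : IsClosed (cube c l) := by
  have : cube c l = ⋂ i, {x : EuclideanSpace ℝ (Fin d) | c i ≤ x i ∧ x i ≤ c i + l} := by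
    ext x
    simp [cube]
  rw [this]
  refine isClosed_iInter fun i => ?_
  have hx : Continuous fun x : EuclideanSpace ℝ (Fin d) => x i := by fun_prop
  exact (isClosed_le continuous_const hx).inter (isClosed_le hx continuous_const)

lemma fc_cube_dist {e : ℕ} {c : Fin (e+1) → ℝ} {l : ℝ} {x y : EuclideanSpace ℝ (Fin (e+1))}
    (hl : 0 ≤ l) (hx : x ∈ cube c l) (hy : y ∈ cube c l) : dist x y ≤ ((e:ℝ)+1) * l := by
  apply fc_dist_le _ _ _ hl
  intro i
  have h1 := hx i
  have h2 := hy i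
  rw [abs_le]
  constructor <;> linarith [h1.1, h1.2, h2.1, h2.2]

lemma fc_cube_compact {e : ℕ} (c : Fin (e+1) → ℝ) {l : ℝ} (hl : 0 ≤ l) :
    IsCompact (cube c l) := by
  apply Metric.isCompact_of_isClosed_isBounded (fc_cube_closed c l)
  rw [Metric.isBounded_iff]
  exact ⟨_, fun x hx y hy => fc_cube_dist hl hx hy⟩

lemma fc_corner_mem {d : ℕ} (c : Fin d → ℝ) {l : ℝ} (hl : 0 ≤ l) :
    WithLp.toLp 2 c ∈ cube c l := by
  intro i
  simp [hl]

lemma fc_cube_inj {d : ℕ} {c c' : Fin d → ℝ} {l : ℝ} (hl : 0 ≤ l)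
    (h : cube c l = cube c' l) : c = c' := by
  have h1 := fc_corner_mem c hl
  have h2 := fc_corner_mem c' hl
  rw [h] at h1
  rw [← h] at h2
  funext i
  exact le_antisymm (h2 i).1 (h1 i).1

lemma fc_child_inj {e K : ℕ} {c : Fin (e+1) → ℝ} {l : ℝ} (hl : 0 < l) (hK : 8 ≤ K)
    {a b : Fin (e+1) → Fin K} (h : fcChild c l K a = fcChild c l K b) : a = b := by
  have hK' : (0:ℝ) < K := by exact_mod_cast (by omega : 0 < K)
  have h1 := fc_cube_inj (by positivity) h
  funext i
  have h2 := congrFun h1 i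
  unfold childCorner at h2
  have h3 : l / K * ((a i : ℕ) : ℝ) = l / K * ((b i : ℕ) : ℝ) := by linarith
  have h4 := mul_left_cancel₀ (by positivity) h3
  apply Fin.ext
  exact_mod_cast h4

lemma fc_nonempty {e N m : ℕ} (hN : 2 ≤ N) (hK : 8 ≤ N^m)
    {𝓕 : ℕ → Set (Set (EuclideanSpace ℝ (Fin (e+1))))}
    (hF : IsFatCantorFamilies (e+1) N m 𝓕) {n : ℕ} {Q : Set (EuclideanSpace ℝ (Fin (e+1)))}
    (hQ : Q ∈ 𝓕 n) : (Q ∩ ⋂ k, ⋃₀ 𝓕 k).Nonempty := by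
  have hex : ∀ k, ∀ P : {P // P ∈ 𝓕 (n+k)}, ∃ P' : {P // P ∈ 𝓕 (n+(k+1))}, P'.1 ⊆ P.1 := by
    rintro k ⟨P, hP⟩
    obtain ⟨c, a₀, hc, h⟩ := fc_child_data hF hP rfl
    obtain ⟨g, hg, -⟩ := fc_repl hK a₀
    have := (h (fcChild c (fatSide N m (n+k)) (N^m) (g a₀))).2 ⟨_, hg a₀, rfl⟩
    exact ⟨⟨_, this.1⟩, this.2⟩
  choose nx hnx using hex
  let s : ∀ k, {P // P ∈ 𝓕 (n+k)} := fun k => Nat.rec ⟨Q, hQ⟩ (fun k P => nx k P) k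
  have hcube : ∀ k, ∃ c, (s k).1 = cube c (fatSide N m (n+k)) := by
    intro k
    obtain ⟨c, a₀, hc, h⟩ := fc_child_data hF (s k).2 rfl
    exact ⟨c, hc⟩
  have hne : (⋂ k, (s k).1).Nonempty := by
    apply IsCompact.nonempty_iInter_of_sequence_nonempty_isCompact_isClosed
    · intro k
      exact hnx k (s k)
    · intro k
      obtain ⟨c, hc⟩ := hcube k
      rw [hc]
      exact ⟨_, fc_corner_mem c (fc_side_pos hN m _).le⟩
    · obtain ⟨c, hc⟩ := hcube 0
      rw [hc]
      exact fc_cube_compact c (fc_side_pos hN m _).le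
    · intro k
      obtain ⟨c, hc⟩ := hcube k
      rw [hc]
      exact fc_cube_closed c _
  obtain ⟨x, hx⟩ := hne
  rw [Set.mem_iInter] at hx
  have hstep : ∀ k, x ∈ ⋃₀ 𝓕 (k+1) → x ∈ ⋃₀ 𝓕 k := by
    rintro k ⟨P, hP, hxP⟩
    obtain ⟨P', hP', hsub⟩ := hF.2.2 k P hP
    exact ⟨P', hP', hsub hxP⟩
  have hdown : ∀ j k, x ∈ ⋃₀ 𝓕 (k+j) → x ∈ ⋃₀ 𝓕 k := by
    intro j
    induction j with
    | zero => intro k h; exact h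
    | succ j ih => intro k h; exact ih k (hstep _ h)
  refine ⟨x, hx 0, Set.mem_iInter.2 fun k => ?_⟩
  apply hdown n k
  rw [add_comm k n]
  exact ⟨_, (s k).2, hx k⟩

lemma fc_child_coord {e K : ℕ} {c : Fin (e+1) → ℝ} {l : ℝ} {a : Fin (e+1) → Fin K}
    {x : EuclideanSpace ℝ (Fin (e+1))} (hx : x ∈ fcChild c l K a) (i : Fin (e+1)) :
    c i + l / K * ((a i : ℕ) : ℝ) ≤ x i ∧ x i ≤ c i + l / K * ((a i : ℕ) : ℝ) + l / K :=
  hx i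

lemma fc_far {e N m : ℕ} (hN : 2 ≤ N) (hK : 8 ≤ N^m)
    {𝓕 : ℕ → Set (Set (EuclideanSpace ℝ (Fin (e+1))))}
    (hF : IsFatCantorFamilies (e+1) N m 𝓕) {n : ℕ} {Q : Set (EuclideanSpace ℝ (Fin (e+1)))}
    (hQ : Q ∈ 𝓕 n) (x : EuclideanSpace ℝ (Fin (e+1))) :
    ∃ z ∈ Q ∩ ⋂ k, ⋃₀ 𝓕 k, fatSide N m n / 4 ≤ dist x z := by
  obtain ⟨K, hKd⟩ : ∃ K, K = N^m := ⟨_, rfl⟩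
  obtain ⟨c, a₀, hc, h⟩ := fc_child_data hF hQ hKd
  have hK8 : 8 ≤ K := hKd ▸ hK
  obtain ⟨g, hg, -, hg2⟩ := fc_repl hK8 a₀
  have hl := fc_side_pos hN m n
  set l := fatSide N m n with hldef
  have hK' : (8:ℝ) ≤ K := by exact_mod_cast hK8
  have key : ∀ b : Fin K, ∃ z ∈ Q ∩ ⋂ k, ⋃₀ 𝓕 k, 
      c 0 + l / K * ((b : ℕ) - 1) ≤ z 0 ∧ z 0 ≤ c 0 + l / K * ((b:ℕ) + 2) := by
    intro b
    have h1 := (h _).2 ⟨g (fun _ => b), hg _, rfl⟩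
    obtain ⟨z, hz1, hz2⟩ := fc_nonempty hN hK hF h1.1
    refine ⟨z, ⟨h1.2 hz1, hz2⟩, ?_⟩
    have h3 := fc_child_coord hz1 0
    have h4 := hg2 (fun _ => b) 0
    have h5 : 0 < l / K := by positivity
    constructor
    · nlinarith [h3.1, h4.2]
    · nlinarith [h3.2, h4.1]
  have hlK : l / K * K = l := by field_simp
  have hlK8 : l / K ≤ l / 8 := by
    apply div_le_div_of_nonneg_left hl.le (by norm_num) hK'
  rcases le_total (x 0) (c 0 + l / 2) with hx | hx
  · obtain ⟨z, hz, h1, -⟩ := key ⟨K - 1, by omega⟩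
    refine ⟨z, hz, ?_⟩
    have h2 := fc_coord_le x z 0
    have h3 := neg_le_abs (x 0 - z 0)
    simp only at h1
    rw [Nat.cast_sub (by omega)] at h1
    push_cast at h1
    nlinarith
  · obtain ⟨z, hz, -, h1⟩ := key ⟨0, by omega⟩
    refine ⟨z, hz, ?_⟩
    have h2 := fc_coord_le x z 0
    have h3 := le_abs_self (x 0 - z 0)
    simp only at h1
    push_cast at h1
    nlinarith

lemma fc_bounded {e N m : ℕ} (hN : 2 ≤ N) (hK : 8 ≤ N^m)
    {𝓕 : ℕ → Set (Set (EuclideanSpace ℝ (Fin (e+1))))}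
    (hF : IsFatCantorFamilies (e+1) N m 𝓕) {n : ℕ} {Q : Set (EuclideanSpace ℝ (Fin (e+1)))}
    (hQ : Q ∈ 𝓕 n) {η : ℝ → ℝ} (hη : IsDistortion η) {Y : Type*} [MetricSpace Y]
    {f : EuclideanSpace ℝ (Fin (e+1)) → Y} (hf : IsQSOn η f (⋂ k, ⋃₀ 𝓕 k)) :
    Bornology.IsBounded (f '' (Q ∩ ⋂ k, ⋃₀ 𝓕 k)) := by
  obtain ⟨x, hx⟩ := fc_nonempty hN hK hF hQ
  obtain ⟨z, hz, hxz⟩ := fc_far hN hK hF hQ x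
  obtain ⟨c, a₀, hc, -⟩ := fc_child_data hF hQ rfl
  have hl := fc_side_pos hN m n
  rw [Metric.isBounded_iff_subset_closedBall (f x)]
  refine ⟨η (((e:ℝ)+1) * fatSide N m n / (fatSide N m n / 4)) * dist (f x) (f z), ?_⟩
  rintro _ ⟨y, hy, rfl⟩
  rw [Metric.mem_closedBall, dist_comm]
  exact fc_qs hη hf hx.2 hy.2 hz.2 (by positivity) hxz
    (fc_cube_dist hl.le (hc ▸ hx.1) (hc ▸ hy.1))

lemma fc_algebra {e K : ℕ} (hK : 8 ≤ K) (a₀ : Fin (e+1) → Fin K)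
    (g : (Fin (e+1) → Fin K) → (Fin (e+1) → Fin K)) (hg : ∀ a, g a ≠ a₀)
    (hg1 : ∀ a, a ≠ a₀ → g a = a) (ρ : (Fin (e+1) → Fin K) → ℝ) (hρ0 : ∀ a, 0 ≤ ρ a)
    {D A ε α : ℝ} (hD : 0 ≤ D) (hA : 0 < A) (hε : 0 < ε) (hα : 0 < α) (hα' : α < (e:ℝ)+1)
    (hρ : ∀ a, a ≠ a₀ → ρ a ≤ ε * D)
    (hcol : ∀ b : Fin e → Fin K, D ≤ A * ∑ j, ρ (g (Fin.cons j b)))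
    (hsmall : 2 * A^(e+1) * ε ^ ((e:ℝ)+1-α) ≤ 1) :
    D ^ α ≤ ∑ a : {a // a ≠ a₀}, ρ a.1 ^ α := by
  have hK0 : (0:ℝ) < K := by exact_mod_cast (by omega : 0 < K)
  rcases hD.eq_or_lt with hD0 | hDpos
  · rw [← hD0, Real.zero_rpow hα.ne']
    exact Finset.sum_nonneg fun a _ => Real.rpow_nonneg (hρ0 _) _
  have h1 : ∀ b : Fin e → Fin K,
      D^(e+1) ≤ A^(e+1) * (K:ℝ)^e * ∑ j, ρ (g (Fin.cons j b))^(e+1) := by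
    intro b
    have h := pow_sum_div_card_le_sum_pow (s := Finset.univ)
      (f := fun j => ρ (g (Fin.cons j b))) (fun j _ => hρ0 _) e
    simp only [Finset.card_univ, Fintype.card_fin] at h
    rw [div_le_iff₀ (by positivity)] at h
    calc D^(e+1) ≤ (A * ∑ j, ρ (g (Fin.cons j b)))^(e+1) := pow_le_pow_left₀ hD (hcol b) _
      _ = A^(e+1) * (∑ j, ρ (g (Fin.cons j b)))^(e+1) := mul_pow _ _ _
      _ ≤ A^(e+1) * ((∑ j, ρ (g (Fin.cons j b))^(e+1)) * (K:ℝ)^e) :=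
          mul_le_mul_of_nonneg_left h (by positivity)
      _ = _ := by ring
  have h3 : ∑ b : Fin e → Fin K, ∑ j, ρ (g (Fin.cons j b))^(e+1) = ∑ a, ρ (g a)^(e+1) := by
    rw [← (Fin.consEquiv (fun _ : Fin (e+1) => Fin K)).sum_comp (fun a => ρ (g a)^(e+1)),
      Fintype.sum_prod_type_right]
    rfl
  have h2 : D^(e+1) ≤ A^(e+1) * ∑ a, ρ (g a)^(e+1) := by
    have h := Finset.sum_le_sum (fun b (_ : b ∈ (Finset.univ : Finset (Fin e → Fin K))) => h1 b)
    rw [← Finset.mul_sum, h3] at h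
    simp only [Finset.sum_const, Finset.card_univ, Fintype.card_fun, Fintype.card_fin,
      nsmul_eq_mul] at h
    push_cast at h
    have hKe : (0:ℝ) < (K:ℝ)^e := by positivity
    refine le_of_mul_le_mul_left ?_ hKe
    linarith
  have h4 : ∑ a, ρ (g a)^(e+1) ≤ 2 * ∑ a : {a // a ≠ a₀}, ρ a.1^(e+1) := by
    have hsub : ∑ a : {a // a ≠ a₀}, ρ a.1^(e+1) = ∑ a ∈ Finset.univ.erase a₀, ρ a^(e+1) := by
      symm
      apply Finset.sum_subtype
      simp
    rw [hsub, ← Finset.add_sum_erase _ _ (Finset.mem_univ a₀), two_mul]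
    apply add_le_add
    · exact Finset.single_le_sum (f := fun a => ρ a^(e+1)) (fun j _ => pow_nonneg (hρ0 _) _)
        (by simp [hg])
    · apply le_of_eq
      apply Finset.sum_congr rfl
      intro a ha
      rw [hg1 a (Finset.ne_of_mem_erase ha)]
  have h5 : ∀ a : {a // a ≠ a₀}, ρ a.1^(e+1) ≤ (ε * D)^((e:ℝ)+1-α) * ρ a.1^α := by
    intro a
    have e1 : ρ a.1^(e+1) = ρ a.1^((e:ℝ)+1-α) * ρ a.1^α := by
      rw [← Real.rpow_add_of_nonneg (hρ0 _) (by linarith) hα.le, ← Real.rpow_natCast]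
      congr 1
      push_cast
      ring
    rw [e1]
    apply mul_le_mul_of_nonneg_right _ (Real.rpow_nonneg (hρ0 _) _)
    exact Real.rpow_le_rpow (hρ0 _) (hρ a.1 a.2) (by linarith)
  have h6 : ∑ a : {a // a ≠ a₀}, ρ a.1^(e+1) ≤
      (ε * D)^((e:ℝ)+1-α) * ∑ a : {a // a ≠ a₀}, ρ a.1^α := by
    rw [Finset.mul_sum]
    exact Finset.sum_le_sum fun a _ => h5 a
  set S := ∑ a : {a // a ≠ a₀}, ρ a.1^α with hS
  have hS0 : 0 ≤ S := Finset.sum_nonneg fun a _ => Real.rpow_nonneg (hρ0 _) _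
  have hDd : D^(e+1) = D^((e:ℝ)+1-α) * D^α := by
    rw [← Real.rpow_add hDpos, ← Real.rpow_natCast]
    congr 1
    push_cast
    ring
  have hDp : 0 < D^((e:ℝ)+1-α) := Real.rpow_pos_of_pos hDpos _
  refine le_of_mul_le_mul_left ?_ hDp
  rw [← hDd]
  calc D^(e+1) ≤ A^(e+1) * (2 * ((ε * D)^((e:ℝ)+1-α) * S)) := by
        refine h2.trans (mul_le_mul_of_nonneg_left ?_ (by positivity))
        linarith
    _ = (2 * A^(e+1) * ε^((e:ℝ)+1-α)) * (D^((e:ℝ)+1-α) * S) := by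
        rw [Real.mul_rpow hε.le hD]
        ring
    _ ≤ 1 * (D^((e:ℝ)+1-α) * S) := by
        apply mul_le_mul_of_nonneg_right hsmall
        positivity
    _ = _ := one_mul _

lemma fc_main {e N m : ℕ} (hN : 2 ≤ N) (hK : 8 ≤ N^m) {η : ℝ → ℝ} (hη : IsDistortion η)
    {α : ℝ} (hα : 0 < α) (hα' : α < (e:ℝ)+1)
    (hsmall : 2 * (2 * η (4 * ((e:ℝ)+1)) * η (20 * ((e:ℝ)+1)))^(e+1) *
      (η (4 * ((e:ℝ)+1) / (N^m : ℕ))) ^ ((e:ℝ)+1-α) ≤ 1)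
    {𝓕 : ℕ → Set (Set (EuclideanSpace ℝ (Fin (e+1))))}
    (hF : IsFatCantorFamilies (e+1) N m 𝓕) {Y : Type*} [MetricSpace Y]
    {f : EuclideanSpace ℝ (Fin (e+1)) → Y} (hf : IsQSOn η f (⋂ k, ⋃₀ 𝓕 k))
    {n : ℕ} {Q₀ : Set (EuclideanSpace ℝ (Fin (e+1)))} (hQ : Q₀ ∈ 𝓕 n) :
    Metric.diam (f '' (Q₀ ∩ ⋂ k, ⋃₀ 𝓕 k)) ^ α ≤
      ∑' Q : {Q' : Set (EuclideanSpace ℝ (Fin (e+1))) // Q' ∈ 𝓕 (n + 1) ∧ Q' ⊆ Q₀},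
        Metric.diam (f '' ((Q : Set (EuclideanSpace ℝ (Fin (e+1)))) ∩ ⋂ k, ⋃₀ 𝓕 k)) ^ α := by
  obtain ⟨K, hKd⟩ : ∃ K, K = N^m := ⟨_, rfl⟩
  obtain ⟨c, a₀, hc, h⟩ := fc_child_data hF hQ hKd
  have hK8 : 8 ≤ K := hKd ▸ hK
  obtain ⟨g, hg, hg1, hg2⟩ := fc_repl hK8 a₀
  have hl := fc_side_pos hN m n
  have hside : fatSide N m (n+1) = fatSide N m n / K := by rw [fc_side_succ, hKd]
  rw [← hKd] at hsmall
  have hK' : (8:ℝ) ≤ K := by exact_mod_cast hK8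
  have he : (0:ℝ) ≤ e := Nat.cast_nonneg e
  set l := fatSide N m n with hldef
  set F := ⋂ k, ⋃₀ 𝓕 k with hFdef
  have hlK0 : 0 < l / K := by positivity
  have hlK : l / K * K = l := by field_simp
  have hlK8 : l / K ≤ l / 8 := by
    apply div_le_div_of_nonneg_left hl.le (by norm_num) hK'
  let ρ : (Fin (e+1) → Fin K) → ℝ := fun a => Metric.diam (f '' (fcChild c l K a ∩ F))
  have hch : ∀ a, a ≠ a₀ → fcChild c l K a ∈ 𝓕 (n+1) ∧ fcChild c l K a ⊆ Q₀ :=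
    fun a ha => (h _).2 ⟨a, ha, rfl⟩
  -- the sum as a finite sum
  let φ : {a // a ≠ a₀} → {Q' // Q' ∈ 𝓕 (n + 1) ∧ Q' ⊆ Q₀} :=
    fun a => ⟨fcChild c l K a.1, hch a.1 a.2⟩
  have hφ : Function.Bijective φ := by
    constructor
    · intro a b hab
      exact Subtype.ext (fc_child_inj hl hK8 (congrArg Subtype.val hab))
    · rintro ⟨Q', hQ'⟩
      obtain ⟨a, ha, rfl⟩ := (h Q').1 hQ'
      exact ⟨⟨a, ha⟩, rfl⟩
  have hsum : ∑' Q : {Q' : Set (EuclideanSpace ℝ (Fin (e+1))) // Q' ∈ 𝓕 (n + 1) ∧ Q' ⊆ Q₀},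
        Metric.diam (f '' ((Q : Set (EuclideanSpace ℝ (Fin (e+1)))) ∩ F)) ^ α =
      ∑ a : {a // a ≠ a₀}, ρ a.1 ^ α := by
    rw [← (Equiv.ofBijective φ hφ).tsum_eq, tsum_fintype]
    rfl
  rw [hsum]
  have hbd : Bornology.IsBounded (f '' (Q₀ ∩ F)) := fc_bounded hN hK hF hQ hη hf
  set D := Metric.diam (f '' (Q₀ ∩ F)) with hDdef
  -- base points
  have hpt : ∀ a, ∃ x, x ∈ fcChild c l K (g a) ∩ F :=
    fun a => fc_nonempty hN hK hF (hch _ (hg a)).1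
  choose p hp using hpt
  have hpQ : ∀ a, p a ∈ Q₀ := fun a => (hch _ (hg a)).2 (hp a).1
  have hpc : ∀ a i, c i + l / K * ((a i : ℕ) - 1) ≤ p a i ∧
      p a i ≤ c i + l / K * ((a i : ℕ) + 2) := by
    intro a i
    have h3 := fc_child_coord (hp a).1 i
    have h4 := hg2 a i
    constructor
    · nlinarith [h3.1, h4.2]
    · nlinarith [h3.2, h4.1]
  have hC1 : 0 < η (4 * ((e:ℝ)+1)) := fc_eta_pos hη (by positivity)
  have hC2 : 0 < η (20 * ((e:ℝ)+1)) := fc_eta_pos hη (by positivity)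
  refine fc_algebra hK8 a₀ g hg hg1 ρ (fun a => Metric.diam_nonneg) Metric.diam_nonneg
    (A := 2 * η (4 * ((e:ℝ)+1)) * η (20 * ((e:ℝ)+1)))
    (ε := η (4 * ((e:ℝ)+1) / K)) (by positivity) (fc_eta_pos hη (by positivity)) hα hα' ?_ ?_
    hsmall
  · intro a ha
    apply Metric.diam_le_of_forall_dist_le
    · exact mul_nonneg (fc_eta_pos hη (by positivity)).le Metric.diam_nonneg
    rintro _ ⟨x, hx, rfl⟩ _ ⟨y, hy, rfl⟩
    obtain ⟨z, hz, hxz⟩ := fc_far hN hK hF hQ x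
    have h1 := fc_qs hη hf hx.2 hy.2 hz.2 (by positivity) hxz
      (fc_cube_dist hlK0.le hx.1 hy.1)
    have h2 : ((e:ℝ)+1) * (l / K) / (l / 4) = 4 * ((e:ℝ)+1) / K := by
      field_simp
    rw [← hldef, h2] at h1
    refine h1.trans (mul_le_mul_of_nonneg_left ?_ (fc_eta_pos hη (by positivity)).le)
    exact Metric.dist_le_diam_of_mem hbd ⟨x, ⟨(hch a ha).2 hx.1, hx.2⟩, rfl⟩ ⟨z, hz, rfl⟩
  · intro b
    let idx : ℕ → Fin K := fun j => ⟨min j (K-1), by omega⟩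
    let ad : ℕ → (Fin (e+1) → Fin K) := fun j => Fin.cons (idx j) b
    have hstep : ∀ j, dist (f (p (ad j))) (f (p (ad (j+1)))) ≤
        η (20 * ((e:ℝ)+1)) * ρ (g (ad j)) := by
      intro j
      have hQ1 := (hch _ (hg (ad j))).1
      obtain ⟨z, hz, hxz⟩ := fc_far hN hK hF hQ1 (p (ad j))
      rw [hside] at hxz
      have hd : dist (p (ad j)) (p (ad (j+1))) ≤ ((e:ℝ)+1) * (5 * (l / K)) := by
        apply fc_dist_le _ _ _ (by positivity)
        intro i
        have q1 := hpc (ad j) i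
        have q2 := hpc (ad (j+1)) i
        have q3 : ((ad j i : ℕ) : ℝ) ≤ (ad (j+1) i : ℕ) + 1 ∧
            ((ad (j+1) i : ℕ) : ℝ) ≤ (ad j i : ℕ) + 1 := by
          refine Fin.cases ?_ (fun i => ?_) i
          · simp only [ad, Fin.cons_zero, idx]
            constructor
            · exact_mod_cast (by omega : min j (K-1) ≤ min (j+1) (K-1) + 1)
            · exact_mod_cast (by omega : min (j+1) (K-1) ≤ min j (K-1) + 1)
          · simp [ad]
        have q4 := mul_le_mul_of_nonneg_left q3.1 hlK0.le
        have q5 := mul_le_mul_of_nonneg_left q3.2 hlK0.le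
        rw [abs_le]
        constructor <;> linarith [q1.1, q1.2, q2.1, q2.2]
      have h1 := fc_qs hη hf (hp (ad j)).2 (hp (ad (j+1))).2 hz.2 (by positivity) hxz hd
      have h2 : ((e:ℝ)+1) * (5 * (l / K)) / (l / K / 4) = 20 * ((e:ℝ)+1) := by
        field_simp
        norm_num
      rw [h2] at h1
      refine h1.trans (mul_le_mul_of_nonneg_left ?_ hC2.le)
      exact Metric.dist_le_diam_of_mem (fc_bounded hN hK hF hQ1 hη hf)
        ⟨_, hp (ad j), rfl⟩ ⟨z, hz, rfl⟩
    have hchain : dist (f (p (ad 0))) (f (p (ad (K-1)))) ≤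
        η (20 * ((e:ℝ)+1)) * ∑ j, ρ (g (Fin.cons j b)) := by
      refine (dist_le_range_sum_dist (fun j => f (p (ad j))) (K-1)).trans ?_
      refine (Finset.sum_le_sum fun j _ => hstep j).trans ?_
      rw [← Finset.mul_sum]
      refine mul_le_mul_of_nonneg_left ?_ hC2.le
      have e1 : ∑ j : Fin K, ρ (g (Fin.cons j b)) = ∑ j ∈ Finset.range K, ρ (g (ad j)) := by
        rw [Finset.sum_range]
        apply Finset.sum_congr rfl
        intro j _
        have : idx j = j := by
          apply Fin.ext
          simp only [idx]
          omega
        simp only [ad, this]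
      rw [e1]
      apply Finset.sum_le_sum_of_subset_of_nonneg
      · exact Finset.range_mono (by omega)
      · intro j _ _
        exact Metric.diam_nonneg
    have hfar : l / 4 ≤ dist (p (ad 0)) (p (ad (K-1))) := by
      have q1 := (hpc (ad 0) 0).2
      have q2 := (hpc (ad (K-1)) 0).1
      have q3 : ((ad 0 0 : ℕ) : ℝ) = 0 := by simp [ad, idx]
      have q4 : ((ad (K-1) 0 : ℕ) : ℝ) = K - 1 := by
        simp only [ad, Fin.cons_zero, idx, min_self]
        rw [Nat.cast_sub (by omega)]
        simp
      rw [q3] at q1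
      rw [q4] at q2
      have q5 := fc_coord_le (p (ad 0)) (p (ad (K-1))) 0
      have q6 := neg_le_abs (p (ad 0) 0 - p (ad (K-1)) 0)
      linarith
    have hdiam : D ≤ 2 * η (4 * ((e:ℝ)+1)) * dist (f (p (ad 0))) (f (p (ad (K-1)))) := by
      have key : ∀ y ∈ Q₀ ∩ F, dist (f (p (ad 0))) (f y) ≤
          η (4 * ((e:ℝ)+1)) * dist (f (p (ad 0))) (f (p (ad (K-1)))) := by
        intro y hy
        have h1 := fc_qs hη hf (hp (ad 0)).2 hy.2 (hp (ad (K-1))).2 (by positivity) hfar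
          (fc_cube_dist hl.le (hc ▸ hpQ (ad 0)) (hc ▸ hy.1))
        have h2 : ((e:ℝ)+1) * l / (l / 4) = 4 * ((e:ℝ)+1) := by
          field_simp
        rwa [h2] at h1
      apply Metric.diam_le_of_forall_dist_le (by positivity)
      rintro _ ⟨x, hx, rfl⟩ _ ⟨y, hy, rfl⟩
      have t := dist_triangle_left (f x) (f y) (f (p (ad 0)))
      linarith [key x hx, key y hy]
    refine hdiam.trans ?_
    rw [mul_assoc (2 * η (4 * ((e:ℝ)+1)))]
    exact mul_le_mul_of_nonneg_left hchain (by positivity)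

/-- For every distortion function `η` and `0 < α < d` there exists `m₀` such
that for every `m ≥ m₀`, every `(N,m)`-fat Cantor set `F` with construction families `𝓕`, every
`η`-quasisymmetry `f : F → Y`, every `n` and every `Q₀ ∈ 𝓕 n`,
`|f Q₀| ^ α ≤ ∑_{Q ∈ 𝓕 (n+1), Q ⊆ Q₀} |f Q| ^ α` (where `f Q` stands for `f (Q ∩ F)`). -/
theorem fatCantor_subadditivity
    (d N : ℕ) (hd : 1 ≤ d) (hN : 2 ≤ N) (η : ℝ → ℝ) (hη : IsDistortion η)
    (α : ℝ) (hα0 : 0 < α) (hαd : α < d) :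
    ∃ m₀ : ℕ, ∀ m, m₀ ≤ m →
      ∀ 𝓕 : ℕ → Set (Set (EuclideanSpace ℝ (Fin d))), IsFatCantorFamilies d N m 𝓕 →
      ∀ (Y : Type) [MetricSpace Y] (f : EuclideanSpace ℝ (Fin d) → Y),
        IsQSOn η f (⋂ k, ⋃₀ 𝓕 k) →
        ∀ n : ℕ, ∀ Q₀ ∈ 𝓕 n,
          Metric.diam (f '' (Q₀ ∩ ⋂ k, ⋃₀ 𝓕 k)) ^ α ≤
            ∑' Q : {Q' : Set (EuclideanSpace ℝ (Fin d)) // Q' ∈ 𝓕 (n + 1) ∧ Q' ⊆ Q₀},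
              Metric.diam (f '' ((Q : Set (EuclideanSpace ℝ (Fin d))) ∩ ⋂ k, ⋃₀ 𝓕 k)) ^ α := by
  obtain ⟨e, rfl⟩ : ∃ e, d = e + 1 := ⟨d - 1, by omega⟩
  have hα' : α < (e:ℝ) + 1 := by exact_mod_cast hαd
  set A : ℝ := 2 * η (4 * ((e:ℝ)+1)) * η (20 * ((e:ℝ)+1)) with hA
  have hN1 : (1:ℝ) < N := by exact_mod_cast (by omega : 1 < N)
  have hpow : Tendsto (fun m : ℕ => ((N^m : ℕ) : ℝ)) atTop atTop := by
    push_cast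
    exact tendsto_pow_atTop_atTop_of_one_lt hN1
  have hinv : Tendsto (fun m : ℕ => 4 * ((e:ℝ)+1) / ((N^m : ℕ) : ℝ)) atTop
      (nhdsWithin 0 (Set.Ici 0)) := by
    rw [tendsto_nhdsWithin_iff]
    refine ⟨tendsto_const_nhds.div_atTop hpow, Filter.Eventually.of_forall fun m => ?_⟩
    rw [Set.mem_Ici]
    positivity
  have hη0 : Tendsto η (nhdsWithin 0 (Set.Ici 0)) (nhds 0) := by
    have := hη.1 0 (Set.mem_Ici.2 le_rfl)
    unfold ContinuousWithinAt at this
    rwa [hη.2.2.1] at this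
  have hcomp := hη0.comp hinv
  have hlim : Tendsto (fun m : ℕ => 2 * A^(e+1) *
      (η (4 * ((e:ℝ)+1) / ((N^m : ℕ) : ℝ))) ^ ((e:ℝ)+1-α)) atTop (nhds 0) := by
    have h1 := (hcomp.rpow_const (p := (e:ℝ)+1-α) (Or.inr (by linarith))).const_mul
      (2 * A^(e+1))
    rw [Real.zero_rpow (by linarith), mul_zero] at h1
    exact h1
  have hev := hlim.eventually_le_const (show (0:ℝ) < 1 by norm_num)
  obtain ⟨m₁, hm₁⟩ := Filter.eventually_atTop.1 hev
  refine ⟨max m₁ 3, fun m hm 𝓕 hF Y _ f hf n Q₀ hQ => ?_⟩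
  have hK : 8 ≤ N^m := by
    calc 8 = 2^3 := by norm_num
      _ ≤ 2^m := Nat.pow_le_pow_right (by norm_num) (le_of_max_le_right hm)
      _ ≤ N^m := Nat.pow_le_pow_left hN m
  exact fc_main hN hK hη hα0 hα' (hm₁ m (le_of_max_le_left hm)) hF hf hQ
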